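/- Let f be differentiable on I° with f' integrable on [a,b], a < b, α,λ ∈ [0,1], q > 1 with 1/p + 1/q = 1, and |f'|^q h-convex on [a,b]. Set C = (1-α)[|f'((1-α)b+αa)|^q + |f'(a)|^q], D = α[|f'((1-α)b+αa)|^q + |f'(b)|^q], ε₁ = (αλ)^{p+1} + (1-α-αλ)^{p+1}, ε₃ = (λ(1-α))^{p+1} + (α-λ(1-α))^{p+1}. If αλ ≤ 1-α ≤ 1-λ(1-α), then |λ(αf(a)+(1-α)f(b)) + (1-λ)f(αa+(1-α)b) - (1/(b-a))∫ₐᵇ f(x)dx| ≤ (b-a)(1/(p+1))^{1/p}(∫₀¹ h(t)dt)^{1/q}[ε₁^{1/p} C^{1/q} + ε₃^{1/p} D^{1/q}]. -/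

import Mathlib

open MeasureTheory

/-!
Let `m = αa + (1 - α)b`. Integrating by parts on `[a, m]` and on `[m, b]` against the kernels
`x - c₁` and `x - c₂` turns the error of a quadrature rule with nodes `a`, `m`, `b` into an integral
of `f'`, the weights of the rule being `c₁ - a`, `c₂ - c₁` and `b - c₂`. Hölder's inequality
separates the kernels, whose `p`-norms are explicit, from `f'`, and the Hermite–Hadamard inequality
for `h`-convex functions bounds the integral of `|f'| ^ q` by the values of `|f'| ^ q` at the nodes.
-/

section HConvex

/-- `h`-convexity of a real function `g` on a set `s`. No sign is imposed on `h` or `g`, and only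
interior parameters `t` are tested, so that the values `h 0` and `h 1` are irrelevant. -/
def HConvexOn {E : Type*} [AddCommGroup E] [Module ℝ E] (h : ℝ → ℝ) (s : Set E) (g : E → ℝ) :
    Prop :=
  ∀ x ∈ s, ∀ y ∈ s, ∀ t ∈ Set.Ioo (0 : ℝ) 1,
    g (t • x + (1 - t) • y) ≤ h t * g x + h (1 - t) * g y

/-- The upper bound that `h`-convexity on `[u, v]` gives for `g x` in terms of `g u` and `g v`: the
analogue of the chord of `g`, to which it reduces for `h = id`. -/
noncomputable def hChord (h g : ℝ → ℝ) (u v x : ℝ) : ℝ :=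
  h ((x - u) / (v - u)) * g v + h (1 - (x - u) / (v - u)) * g u

lemma HConvexOn.mono {E : Type*} [AddCommGroup E] [Module ℝ E] {h : ℝ → ℝ} {s t : Set E}
    {g : E → ℝ} (hg : HConvexOn h t g) (hst : s ⊆ t) : HConvexOn h s g :=
  fun x hx y hy => hg x (hst hx) y (hst hy)

variable {h g : ℝ → ℝ} {u v : ℝ}

lemma HConvexOn.le_hChord (hg : HConvexOn h (Set.Icc u v) g) {x : ℝ} (hx : x ∈ Set.Ioo u v) :
    g x ≤ hChord h g u v x := by
  have huv : u < v := hx.1.trans hx.2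
  have hvu : 0 < v - u := sub_pos.2 huv
  have ht : (x - u) / (v - u) ∈ Set.Ioo (0 : ℝ) 1 :=
    ⟨div_pos (sub_pos.2 hx.1) hvu, (div_lt_one hvu).2 (by linarith [hx.2])⟩
  have hx_eq : ((x - u) / (v - u)) • v + (1 - (x - u) / (v - u)) • u = x := by
    simp only [smul_eq_mul]
    field_simp
    ring
  simpa only [hChord, hx_eq] using
    hg v (Set.right_mem_Icc.2 huv.le) u (Set.left_mem_Icc.2 huv.le) _ ht

lemma intervalIntegrable_comp_sub_div_sub (hh : IntervalIntegrable h volume 0 1) (u v : ℝ) :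
    IntervalIntegrable (fun x => h ((x - u) / (v - u))) volume u v := by
  rcases eq_or_ne u v with rfl | huv
  · exact IntervalIntegrable.refl
  have hvu : v - u ≠ 0 := sub_ne_zero.2 huv.symm
  simpa [div_eq_inv_mul, hvu] using
    (hh.comp_mul_left (c := (v - u)⁻¹)).comp_sub_right u

lemma integral_comp_sub_div_sub (h : ℝ → ℝ) (u v : ℝ) :
    ∫ x in u..v, h ((x - u) / (v - u)) = (v - u) * ∫ t in (0 : ℝ)..1, h t := by
  rcases eq_or_ne u v with rfl | huv
  · simp
  have hvu : v - u ≠ 0 := sub_ne_zero.2 huv.symm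
  rw [intervalIntegral.integral_comp_sub_right (fun y => h (y / (v - u))),
    intervalIntegral.integral_comp_div _ hvu, sub_self, zero_div, div_self hvu, smul_eq_mul]

lemma intervalIntegrable_comp_one_sub (hh : IntervalIntegrable h volume 0 1) :
    IntervalIntegrable (fun t => h (1 - t)) volume 0 1 := by
  simpa using (hh.comp_sub_left 1).symm

lemma intervalIntegrable_hChord (hh : IntervalIntegrable h volume 0 1) (g : ℝ → ℝ) (u v : ℝ) :
    IntervalIntegrable (hChord h g u v) volume u v :=
  ((intervalIntegrable_comp_sub_div_sub hh u v).mul_const _).add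
    ((intervalIntegrable_comp_sub_div_sub (intervalIntegrable_comp_one_sub hh) u v).mul_const _)

lemma integral_hChord (hh : IntervalIntegrable h volume 0 1) (g : ℝ → ℝ) (u v : ℝ) :
    ∫ x in u..v, hChord h g u v x = (v - u) * (g u + g v) * ∫ t in (0 : ℝ)..1, h t := by
  have hreflect : ∫ t in (0 : ℝ)..1, h (1 - t) = ∫ t in (0 : ℝ)..1, h t := by simp
  simp only [hChord]
  rw [intervalIntegral.integral_add
      ((intervalIntegrable_comp_sub_div_sub hh u v).mul_const _)
      ((intervalIntegrable_comp_sub_div_sub (intervalIntegrable_comp_one_sub hh) u v).mul_const _),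
    intervalIntegral.integral_mul_const, intervalIntegral.integral_mul_const,
    integral_comp_sub_div_sub, integral_comp_sub_div_sub (fun t => h (1 - t)), hreflect]
  ring

lemma HConvexOn.intervalIntegrable (hg : HConvexOn h (Set.Icc u v) g) (huv : u ≤ v)
    (hh : IntervalIntegrable h volume 0 1) (hg_nonneg : ∀ x ∈ Set.Ioo u v, 0 ≤ g x)
    (hg_meas : AEStronglyMeasurable g (volume.restrict (Set.Ioo u v))) :
    IntervalIntegrable g volume u v := by
  rw [intervalIntegrable_iff_integrableOn_Ioo_of_le huv]
  refine ((intervalIntegrable_iff_integrableOn_Ioo_of_le huv).1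
    (intervalIntegrable_hChord hh g u v)).mono' hg_meas ?_
  filter_upwards [ae_restrict_mem measurableSet_Ioo] with x hx
  rw [Real.norm_of_nonneg (hg_nonneg x hx)]
  exact hg.le_hChord hx

/-- The right-hand **Hermite–Hadamard inequality** for `h`-convex functions. -/
lemma HConvexOn.integral_le (hg : HConvexOn h (Set.Icc u v) g) (huv : u ≤ v)
    (hh : IntervalIntegrable h volume 0 1) (hg_int : IntervalIntegrable g volume u v) :
    ∫ x in u..v, g x ≤ (v - u) * (g u + g v) * ∫ t in (0 : ℝ)..1, h t := by
  rw [← integral_hChord hh]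
  exact intervalIntegral.integral_mono_on_of_le_Ioo huv hg_int
    (intervalIntegrable_hChord hh g u v) fun x hx => hg.le_hChord hx

end HConvex

section NormRpow

variable {E : Type*} [NormedAddCommGroup E] {h : ℝ → ℝ} {F : ℝ → E} {q u v : ℝ}

lemma HConvexOn.intervalIntegrable_norm_rpow
    (hF : HConvexOn h (Set.Icc u v) fun x => ‖F x‖ ^ q) (huv : u ≤ v)
    (hh : IntervalIntegrable h volume 0 1)
    (hF_meas : AEStronglyMeasurable F (volume.restrict (Set.Ioo u v))) :
    IntervalIntegrable (fun x => ‖F x‖ ^ q) volume u v :=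
  hF.intervalIntegrable huv hh (fun _ _ => by positivity)
    (hF_meas.norm.aemeasurable.pow_const q).aestronglyMeasurable

lemma HConvexOn.memLp_of_norm_rpow (hF : HConvexOn h (Set.Icc u v) fun x => ‖F x‖ ^ q) (huv : u ≤ v)
    (hq : 0 < q) (hh : IntervalIntegrable h volume 0 1)
    (hF_meas : AEStronglyMeasurable F (volume.restrict (Set.Ioo u v))) :
    MemLp F (ENNReal.ofReal q) (volume.restrict (Set.Ioo u v)) := by
  rw [← integrable_norm_rpow_iff hF_meas (by simpa using hq) ENNReal.ofReal_ne_top,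
    ENNReal.toReal_ofReal hq.le]
  exact (intervalIntegrable_iff_integrableOn_Ioo_of_le huv).1
    (hF.intervalIntegrable_norm_rpow huv hh hF_meas)

end NormRpow

lemma integral_abs_sub_rpow {u v c p : ℝ} (huc : u ≤ c) (hcv : c ≤ v) (hp : 0 ≤ p) :
    ∫ x in u..v, |x - c| ^ p = ((c - u) ^ (p + 1) + (v - c) ^ (p + 1)) / (p + 1) := by
  have hcont : Continuous fun x : ℝ => |x - c| ^ p :=
    (by fun_prop : Continuous fun x : ℝ => |x - c|).rpow_const fun _ => Or.inr hp
  have hleft : ∫ x in u..c, |x - c| ^ p = (c - u) ^ (p + 1) / (p + 1) := calc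
    _ = ∫ x in u..c, (c - x) ^ p := intervalIntegral.integral_congr fun x hx => by
      rw [Set.uIcc_of_le huc] at hx
      simp only [abs_sub_comm x c, abs_of_nonneg (sub_nonneg.2 hx.2)]
    _ = _ := by
      rw [intervalIntegral.integral_comp_sub_left (fun x => x ^ p),
        integral_rpow (Or.inl (by linarith)), sub_self, Real.zero_rpow (by linarith), sub_zero]
  have hright : ∫ x in c..v, |x - c| ^ p = (v - c) ^ (p + 1) / (p + 1) := calc
    _ = ∫ x in c..v, (x - c) ^ p := intervalIntegral.integral_congr fun x hx => by
      rw [Set.uIcc_of_le hcv] at hx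
      simp only [abs_of_nonneg (sub_nonneg.2 hx.1)]
    _ = _ := by
      rw [intervalIntegral.integral_comp_sub_right (fun x => x ^ p),
        integral_rpow (Or.inl (by linarith)), sub_self, Real.zero_rpow (by linarith), sub_zero]
  rw [← intervalIntegral.integral_add_adjacent_intervals (hcont.intervalIntegrable u c)
    (hcont.intervalIntegrable c v), hleft, hright, add_div]

lemma rpow_one_div_mul_rpow_one_div_homogeneous {w x y p q H K : ℝ} (hpq : p.HolderConjugate q)
    (hw : 0 ≤ w) (hx : 0 ≤ x) (hy : 0 ≤ y) (hH : 0 ≤ H) (hK : 0 ≤ K) :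
    (((w * x) ^ (p + 1) + (w * y) ^ (p + 1)) / (p + 1)) ^ (1 / p) * (w * K * H) ^ (1 / q) =
      w * (w * (1 / (p + 1)) ^ (1 / p) * H ^ (1 / q) *
        ((x ^ (p + 1) + y ^ (p + 1)) ^ (1 / p) * K ^ (1 / q))) := by
  have hp := hpq.pos
  have hfactor : ((w * x) ^ (p + 1) + (w * y) ^ (p + 1)) / (p + 1) =
      w ^ (p + 1) * (1 / (p + 1)) * (x ^ (p + 1) + y ^ (p + 1)) := by
    rw [Real.mul_rpow hw hx, Real.mul_rpow hw hy]
    ring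
  have hdegree : (p + 1) * (1 / p) + 1 / q = 2 := by
    have hsum := hpq.inv_add_inv_eq_one
    have hcancel := mul_inv_cancel₀ hp.ne'
    simp only [one_div]
    linear_combination hsum + hcancel
  have hw_sq : w ^ ((p + 1) * (1 / p)) * w ^ (1 / q) = w * w := by
    rw [← Real.rpow_add' hw (by rw [hdegree]; norm_num), hdegree, Real.rpow_two, sq]
  rw [hfactor, Real.mul_rpow (by positivity) (by positivity),
    Real.mul_rpow (by positivity) (by positivity), Real.mul_rpow (by positivity) hH,
    Real.mul_rpow hw hK, ← Real.rpow_mul hw]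
  linear_combination ((1 / (p + 1)) ^ (1 / p) * H ^ (1 / q) *
    ((x ^ (p + 1) + y ^ (p + 1)) ^ (1 / p) * K ^ (1 / q))) * hw_sq

section VectorValued

variable {E : Type*} [NormedAddCommGroup E] [NormedSpace ℝ E]

lemma norm_integral_smul_le_Lp_mul_Lq {X 𝕜 : Type*} [MeasurableSpace X] {μ : Measure X}
    [NormedField 𝕜] [NormedSpace 𝕜 E] {φ : X → 𝕜} {F : X → E} {p q : ℝ}
    (hpq : p.HolderConjugate q) (hφ : MemLp φ (ENNReal.ofReal p) μ)
    (hF : MemLp F (ENNReal.ofReal q) μ) :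
    ‖∫ x, φ x • F x ∂μ‖ ≤
      (∫ x, ‖φ x‖ ^ p ∂μ) ^ (1 / p) * (∫ x, ‖F x‖ ^ q ∂μ) ^ (1 / q) := calc
  _ ≤ ∫ x, ‖φ x • F x‖ ∂μ := norm_integral_le_integral_norm _
  _ = ∫ x, ‖φ x‖ * ‖F x‖ ∂μ := by simp only [norm_smul]
  _ ≤ _ := by simpa only [norm_norm] using integral_mul_norm_le_Lp_mul_Lq hpq hφ.norm hF.norm

variable {h : ℝ → ℝ} {f f' F : ℝ → E} {a b c c₁ c₂ m p q u v : ℝ}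

lemma norm_integral_sub_smul_le_of_hConvexOn (huc : u ≤ c) (hcv : c ≤ v)
    (hpq : p.HolderConjugate q) (hh : IntervalIntegrable h volume 0 1)
    (hF_meas : AEStronglyMeasurable F (volume.restrict (Set.Ioo u v)))
    (hF : HConvexOn h (Set.Icc u v) fun x => ‖F x‖ ^ q) :
    ‖∫ x in u..v, (x - c) • F x‖ ≤
      (((c - u) ^ (p + 1) + (v - c) ^ (p + 1)) / (p + 1)) ^ (1 / p) *
        ((v - u) * (‖F u‖ ^ q + ‖F v‖ ^ q) * ∫ t in (0 : ℝ)..1, h t) ^ (1 / q) := by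
  have huv : u ≤ v := huc.trans hcv
  have hkernel : MemLp (fun x : ℝ => x - c) (ENNReal.ofReal p) (volume.restrict (Set.Ioo u v)) :=
    (MonotoneOn.memLp_isCompact isCompact_Icc fun _ _ _ _ hxy =>
      sub_le_sub_right hxy c).mono_measure (Measure.restrict_mono Set.Ioo_subset_Icc_self le_rfl)
  have hholder := norm_integral_smul_le_Lp_mul_Lq hpq hkernel
    (hF.memLp_of_norm_rpow huv hpq.symm.pos hh hF_meas)
  simp only [← integral_Ioc_eq_integral_Ioo, ← intervalIntegral.integral_of_le huv,
    Real.norm_eq_abs] at hholder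
  have hkernel_nonneg : 0 ≤ ∫ x in u..v, |x - c| ^ p :=
    intervalIntegral.integral_nonneg huv fun _ _ => by positivity
  have hFq_nonneg : 0 ≤ ∫ x in u..v, ‖F x‖ ^ q :=
    intervalIntegral.integral_nonneg huv fun _ _ => by positivity
  have hFq_le := hF.integral_le huv hh (hF.intervalIntegrable_norm_rpow huv hh hF_meas)
  rw [← integral_abs_sub_rpow huc hcv hpq.nonneg]
  exact hholder.trans <| mul_le_mul_of_nonneg_left
    (Real.rpow_le_rpow hFq_nonneg hFq_le hpq.symm.one_div_nonneg)
    (Real.rpow_nonneg hkernel_nonneg _)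

lemma aestronglyMeasurable_of_hasDerivAt [CompleteSpace E] {s : Set ℝ} (hs : MeasurableSet s)
    (hder : ∀ x ∈ s, HasDerivAt f (f' x) x) : AEStronglyMeasurable f' (volume.restrict s) :=
  (aestronglyMeasurable_deriv f _).congr <| by
    filter_upwards [ae_restrict_mem hs] with x hx using (hder x hx).deriv

variable [CompleteSpace E]

lemma integral_sub_smul_deriv (c : ℝ) (hf : ContinuousOn f (Set.uIcc u v))
    (hder : ∀ x ∈ Set.Ioo (min u v) (max u v), HasDerivAt f (f' x) x)
    (hf' : IntervalIntegrable f' volume u v) :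
    ∫ x in u..v, (x - c) • f' x = (v - c) • f v - (u - c) • f u - ∫ x in u..v, f x := by
  simpa only [one_smul] using intervalIntegral.integral_smul_deriv_eq_deriv_smul_of_hasDerivAt
    (u := fun x => x - c) (u' := fun _ => 1) (by fun_prop) hf
    (fun x _ => (hasDerivAt_id x).sub_const c) hder intervalIntegrable_const hf'

lemma norm_two_point_quadrature_error_le (huc : u ≤ c) (hcv : c ≤ v) (hpq : p.HolderConjugate q)
    (hh : IntervalIntegrable h volume 0 1) (hf : ContinuousOn f (Set.Icc u v))
    (hder : ∀ x ∈ Set.Ioo u v, HasDerivAt f (f' x) x)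
    (hconv : HConvexOn h (Set.Icc u v) fun x => ‖f' x‖ ^ q) :
    ‖(c - u) • f u + (v - c) • f v - ∫ x in u..v, f x‖ ≤
      (((c - u) ^ (p + 1) + (v - c) ^ (p + 1)) / (p + 1)) ^ (1 / p) *
        ((v - u) * (‖f' u‖ ^ q + ‖f' v‖ ^ q) * ∫ t in (0 : ℝ)..1, h t) ^ (1 / q) := by
  have huv : u ≤ v := huc.trans hcv
  have hmeas := aestronglyMeasurable_of_hasDerivAt measurableSet_Ioo hder
  have hint : IntervalIntegrable f' volume u v :=
    (intervalIntegrable_iff_integrableOn_Ioo_of_le huv).2 <|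
      (hconv.memLp_of_norm_rpow huv hpq.symm.pos hh hmeas).integrable
        (by simpa using hpq.symm.lt.le)
  have hparts : ∫ x in u..v, (x - c) • f' x =
      (c - u) • f u + (v - c) • f v - ∫ x in u..v, f x := by
    rw [integral_sub_smul_deriv c (by rwa [Set.uIcc_of_le huv])
      (by rwa [min_eq_left huv, max_eq_right huv]) hint]
    module
  rw [← hparts]
  exact norm_integral_sub_smul_le_of_hConvexOn huc hcv hpq hh hmeas hconv

lemma norm_three_point_quadrature_error_le (hac : a ≤ c₁) (hcm : c₁ ≤ m) (hmc : m ≤ c₂)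
    (hcb : c₂ ≤ b) (hpq : p.HolderConjugate q) (hh : IntervalIntegrable h volume 0 1)
    (hf : ContinuousOn f (Set.Icc a b)) (hder : ∀ x ∈ Set.Ioo a b, HasDerivAt f (f' x) x)
    (hconv : HConvexOn h (Set.Icc a b) fun x => ‖f' x‖ ^ q) :
    ‖(c₁ - a) • f a + (c₂ - c₁) • f m + (b - c₂) • f b - ∫ x in a..b, f x‖ ≤
      (((c₁ - a) ^ (p + 1) + (m - c₁) ^ (p + 1)) / (p + 1)) ^ (1 / p) *
          ((m - a) * (‖f' a‖ ^ q + ‖f' m‖ ^ q) * ∫ t in (0 : ℝ)..1, h t) ^ (1 / q) +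
        (((c₂ - m) ^ (p + 1) + (b - c₂) ^ (p + 1)) / (p + 1)) ^ (1 / p) *
          ((b - m) * (‖f' m‖ ^ q + ‖f' b‖ ^ q) * ∫ t in (0 : ℝ)..1, h t) ^ (1 / q) := by
  have ham : a ≤ m := hac.trans hcm
  have hmb : m ≤ b := hmc.trans hcb
  have hleft : Set.Icc a m ⊆ Set.Icc a b := Set.Icc_subset_Icc_right hmb
  have hright : Set.Icc m b ⊆ Set.Icc a b := Set.Icc_subset_Icc_left ham
  have hsplit : (c₁ - a) • f a + (c₂ - c₁) • f m + (b - c₂) • f b - ∫ x in a..b, f x =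
      ((c₁ - a) • f a + (m - c₁) • f m - ∫ x in a..m, f x) +
        ((c₂ - m) • f m + (b - c₂) • f b - ∫ x in m..b, f x) := by
    rw [← intervalIntegral.integral_add_adjacent_intervals
      ((hf.mono hleft).intervalIntegrable_of_Icc ham)
      ((hf.mono hright).intervalIntegrable_of_Icc hmb)]
    module
  rw [hsplit]
  exact norm_add_le_of_le
    (norm_two_point_quadrature_error_le hac hcm hpq hh (hf.mono hleft)
      (fun x hx => hder x (Set.Ioo_subset_Ioo_right hmb hx)) (hconv.mono hleft))
    (norm_two_point_quadrature_error_le hmc hcb hpq hh (hf.mono hright)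
      (fun x hx => hder x (Set.Ioo_subset_Ioo_left ham hx)) (hconv.mono hright))

lemma norm_barycentric_quadrature_error_le {α κ₁ κ₂ : ℝ} (hab : a < b)
    (hm : m = α * a + (1 - α) * b) (hκ₁ : κ₁ ∈ Set.Icc 0 (1 - α)) (hκ₂ : κ₂ ∈ Set.Icc 0 α)
    (hpq : p.HolderConjugate q) (hf : ContinuousOn f (Set.Icc a b))
    (hder : ∀ x ∈ Set.Ioo a b, HasDerivAt f (f' x) x) (hh : IntervalIntegrable h volume 0 1)
    (hh_nonneg : 0 ≤ ∫ t in (0 : ℝ)..1, h t)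
    (hconv : HConvexOn h (Set.Icc a b) fun x => ‖f' x‖ ^ q) :
    ‖κ₁ • f a + (1 - κ₁ - κ₂) • f m + κ₂ • f b - (1 / (b - a)) • ∫ x in a..b, f x‖ ≤
      (b - a) * (1 / (p + 1)) ^ (1 / p) * (∫ t in (0 : ℝ)..1, h t) ^ (1 / q) *
        ((κ₁ ^ (p + 1) + (1 - α - κ₁) ^ (p + 1)) ^ (1 / p) *
            ((1 - α) * (‖f' m‖ ^ q + ‖f' a‖ ^ q)) ^ (1 / q) +
          (κ₂ ^ (p + 1) + (α - κ₂) ^ (p + 1)) ^ (1 / p) *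
            (α * (‖f' m‖ ^ q + ‖f' b‖ ^ q)) ^ (1 / q)) := by
  have hw : 0 < b - a := sub_pos.2 hab
  have hα₀ : 0 ≤ α := hκ₂.1.trans hκ₂.2
  have hα₁ : 0 ≤ 1 - α := hκ₁.1.trans hκ₁.2
  have hgap₁ : 0 ≤ 1 - α - κ₁ := sub_nonneg.2 hκ₁.2
  have hgap₂ : 0 ≤ α - κ₂ := sub_nonneg.2 hκ₂.2
  obtain ⟨c₁, hac⟩ : ∃ c₁, c₁ - a = (b - a) * κ₁ := ⟨a + (b - a) * κ₁, by ring⟩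
  obtain ⟨c₂, hcb⟩ : ∃ c₂, b - c₂ = (b - a) * κ₂ := ⟨b - (b - a) * κ₂, by ring⟩
  have hcm : m - c₁ = (b - a) * (1 - α - κ₁) := by linear_combination hm - hac
  have hmc : c₂ - m = (b - a) * (α - κ₂) := by linear_combination -hm - hcb
  have hleft : (m - a) * (‖f' a‖ ^ q + ‖f' m‖ ^ q) =
      (b - a) * ((1 - α) * (‖f' m‖ ^ q + ‖f' a‖ ^ q)) := by rw [hm]; ring
  have hright : (b - m) * (‖f' m‖ ^ q + ‖f' b‖ ^ q) =
      (b - a) * (α * (‖f' m‖ ^ q + ‖f' b‖ ^ q)) := by rw [hm]; ring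
  have herror : (b - a) • (κ₁ • f a + (1 - κ₁ - κ₂) • f m + κ₂ • f b
        - (1 / (b - a)) • ∫ x in a..b, f x) =
      (c₁ - a) • f a + (c₂ - c₁) • f m + (b - c₂) • f b - ∫ x in a..b, f x := by
    rw [smul_sub, smul_smul (b - a) (1 / (b - a)), mul_one_div_cancel hw.ne', hac, hcb,
      show c₂ - c₁ = (b - a) * (1 - κ₁ - κ₂) by linear_combination -hac - hcb]
    module
  refine le_of_mul_le_mul_left ?_ hw
  rw [← norm_smul_of_nonneg hw.le, herror]
  refine (norm_three_point_quadrature_error_le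
    (sub_nonneg.1 (by rw [hac]; exact mul_nonneg hw.le hκ₁.1))
    (sub_nonneg.1 (by rw [hcm]; positivity)) (sub_nonneg.1 (by rw [hmc]; positivity))
    (sub_nonneg.1 (by rw [hcb]; exact mul_nonneg hw.le hκ₂.1))
    hpq hh hf hder hconv).trans_eq ?_
  rw [hac, hcm, hmc, hcb, hleft, hright, add_comm (((b - a) * (α - κ₂)) ^ (p + 1)),
    rpow_one_div_mul_rpow_one_div_homogeneous hpq hw.le hκ₁.1 hgap₁ hh_nonneg (by positivity),
    rpow_one_div_mul_rpow_one_div_homogeneous hpq hw.le hκ₂.1 hgap₂ hh_nonneg (by positivity)]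
  ring

end VectorValued

theorem stmt_7_general {E : Type*} [NormedAddCommGroup E] [NormedSpace ℝ E] [CompleteSpace E]
    {h : ℝ → ℝ} {f f' : ℝ → E} {a b α l p q C D ε₁ ε₃ : ℝ} (hab : a < b)
    (hα : α ∈ Set.Icc (0 : ℝ) 1) (hl : 0 ≤ l) (hpq : p.HolderConjugate q)
    (hf : ContinuousOn f (Set.Icc a b)) (hder : ∀ x ∈ Set.Ioo a b, HasDerivAt f (f' x) x)
    (hh : IntervalIntegrable h volume 0 1) (hh_nonneg : 0 ≤ ∫ t in (0 : ℝ)..1, h t)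
    (hconv : HConvexOn h (Set.Icc a b) fun x => ‖f' x‖ ^ q)
    (hC : C = (1 - α) * (‖f' ((1 - α) * b + α * a)‖ ^ q + ‖f' a‖ ^ q))
    (hD : D = α * (‖f' ((1 - α) * b + α * a)‖ ^ q + ‖f' b‖ ^ q))
    (hε₁ : ε₁ = (α * l) ^ (p + 1) + (1 - α - α * l) ^ (p + 1))
    (hε₃ : ε₃ = (l * (1 - α)) ^ (p + 1) + (α - l * (1 - α)) ^ (p + 1))
    (hcase₁ : α * l ≤ 1 - α) (hcase₂ : l * (1 - α) ≤ α) :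
    ‖l • (α • f a + (1 - α) • f b) + (1 - l) • f (α * a + (1 - α) * b)
        - (1 / (b - a)) • ∫ x in a..b, f x‖
      ≤ (b - a) * (1 / (p + 1)) ^ (1 / p) * (∫ t in (0 : ℝ)..1, h t) ^ (1 / q) *
        (ε₁ ^ (1 / p) * C ^ (1 / q) + ε₃ ^ (1 / p) * D ^ (1 / q)) := by
  have hnodes : (1 - α) * b + α * a = α * a + (1 - α) * b := by ring
  have hweights : l • (α • f a + (1 - α) • f b) + (1 - l) • f (α * a + (1 - α) * b) =
      (α * l) • f a + (1 - α * l - l * (1 - α)) • f (α * a + (1 - α) * b) +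
        (l * (1 - α)) • f b := by
    module
  rw [hweights, hε₁, hε₃, hC, hD, hnodes]
  exact norm_barycentric_quadrature_error_le hab rfl ⟨mul_nonneg hα.1 hl, hcase₁⟩
    ⟨mul_nonneg hl (sub_nonneg.2 hα.2), hcase₂⟩ hpq hf hder hh hh_nonneg hconv

theorem stmt_7 (I : Set ℝ) (h f f' : ℝ → ℝ) (a b α l p q C D ε₁ ε₃ : ℝ)
    (hab : a < b) (hI : Set.Icc a b ⊆ interior I)
    (hα : α ∈ Set.Icc (0:ℝ) 1) (hl : l ∈ Set.Icc (0:ℝ) 1)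
    (hq : 1 < q) (hpq : 1/p + 1/q = 1)
    (hder : ∀ x ∈ interior I, HasDerivAt f (f' x) x)
    (hint : IntervalIntegrable f' volume a b)
    (hh0 : ∀ t ∈ Set.Ioo (0:ℝ) 1, 0 ≤ h t) (hhne : h ≠ 0)
    (hhint : IntervalIntegrable h volume 0 1)
    (hconv : ∀ x ∈ Set.Icc a b, ∀ y ∈ Set.Icc a b, ∀ t ∈ Set.Ioo (0:ℝ) 1,
      |f' (t * x + (1 - t) * y)| ^ q ≤ h t * |f' x| ^ q + h (1 - t) * |f' y| ^ q)
    (hC : C = (1 - α) * (|f' ((1 - α) * b + α * a)| ^ q + |f' a| ^ q))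
    (hD : D = α * (|f' ((1 - α) * b + α * a)| ^ q + |f' b| ^ q))
    (hε₁ : ε₁ = (α * l) ^ (p+1) + (1 - α - α * l) ^ (p+1))
    (hε₃ : ε₃ = (l * (1 - α)) ^ (p+1) + (α - l * (1 - α)) ^ (p+1))
    (hcase₁ : α * l ≤ 1 - α) (hcase₂ : 1 - α ≤ 1 - l * (1 - α)) :
    |l * (α * f a + (1 - α) * f b) + (1 - l) * f (α * a + (1 - α) * b)
        - (1 / (b - a)) * ∫ x in a..b, f x|
      ≤ (b - a) * (1/(p+1)) ^ (1/p) * (∫ t in (0:ℝ)..1, h t) ^ (1/q) *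
        (ε₁ ^ (1/p) * C ^ (1/q) + ε₃ ^ (1/p) * D ^ (1/q)) := by
  have hd : ∀ x ∈ Set.Icc a b, HasDerivAt f (f' x) x := fun x hx => hder x (hI hx)
  have hH : 0 ≤ ∫ t in (0 : ℝ)..1, h t := by
    simpa using intervalIntegral.integral_mono_on_of_le_Ioo zero_le_one
      (intervalIntegrable_const (c := (0 : ℝ))) hhint hh0
  exact stmt_7_general hab hα hl.1
    (Real.holderConjugate_iff.2 ⟨hq, by simpa [add_comm] using hpq⟩).symm
    (fun x hx => (hd x hx).continuousAt.continuousWithinAt)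
    (fun x hx => hd x (Set.Ioo_subset_Icc_self hx)) hhint hH hconv hC hD hε₁ hε₃ hcase₁
    (by linarith)
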